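/- For every real number α ≥ 1 and every position 1 ≤ j ≤ n, LRep_α[j] = max({SC[j]} ∪ { b+ℓ−j : (a,b,ℓ) is a maximal α-gapped repeat occurrence with nonempty gap in w with b ≤ j and α·(j−b) ≤ (α−1)·ℓ − (b−a−ℓ) }). -/

import Mathlib

/- Words are `List α`, positions are 1-based.  `ltr w i` is the letter at position `i`,
`fac w i j` is the factor `w[i..j]` (empty when `i > j`). -/

variable {α : Type*}

def ltr (w : List α) (i : ℕ) : Option α := w[i - 1]?

def fac (w : List α) (i j : ℕ) : List α := (w.take j).drop (i - 1)

/-- An `A`-gapped repeat occurrence `(a,b,ℓ)` with nonempty gap in `w`: equal arms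
`w[a..a+ℓ-1] = w[b..b+ℓ-1]`, gap length `δ = b-a-ℓ ≥ 1`, and `ℓ + δ ≤ A·ℓ`. -/
def GapRepOcc (A : ℝ) (w : List α) (a b ℓ : ℕ) : Prop :=
  1 ≤ a ∧ 1 ≤ ℓ ∧ a + ℓ < b ∧ b + ℓ - 1 ≤ w.length ∧
  (∀ t < ℓ, ltr w (a + t) = ltr w (b + t)) ∧
  (ℓ : ℝ) + ((b - a - ℓ : ℕ) : ℝ) ≤ A * (ℓ : ℝ)

/-- A maximal `A`-gapped repeat occurrence: the arms can be extended neither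
simultaneously to the right nor simultaneously to the left. -/
def MaxGapRepOcc (A : ℝ) (w : List α) (a b ℓ : ℕ) : Prop :=
  GapRepOcc A w a b ℓ ∧
  ¬(2 ≤ b - a - ℓ ∧ b + ℓ ≤ w.length ∧ ltr w (a + ℓ) = ltr w (b + ℓ)) ∧
  ¬(2 ≤ b - a - ℓ ∧ 2 ≤ a ∧ ltr w (a - 1) = ltr w (b - 1))

/-- `LRep A w j` : the maximal `|u|` such that `u·v` is a suffix of `w[1..j-1]`,
`u` is a prefix of `w[j..n]`, and `|u| + |v| ≤ A·|u|` (0 if no such `u`). -/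
noncomputable def LRep (A : ℝ) (w : List α) (j : ℕ) : ℕ :=
  sSup {m | ∃ u v : List α, u.length = m ∧
    (u ++ v) <:+ fac w 1 (j - 1) ∧ u <+: fac w j w.length ∧
    (u.length : ℝ) + (v.length : ℝ) ≤ A * (u.length : ℝ)}

/-- `SC w j` : the longest arm of a square centred at position `j`. -/
noncomputable def SC (w : List α) (j : ℕ) : ℕ :=
  sSup {m | ∃ u : List α, u.length = m ∧ u ≠ [] ∧
    u <:+ fac w 1 (j - 1) ∧ u <+: fac w j w.length}

theorem rep_conv_fwd (w u v : List α) (i : ℕ) (hi : i ≤ w.length)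
    (h1 : (u ++ v) <:+ w.take i) (h2 : u <+: w.drop i) :
    u.length + v.length ≤ i ∧ i + u.length ≤ w.length ∧
      ∀ t < u.length, w[i - (u.length + v.length) + t]? = w[i + t]? := by
  obtain ⟨s, hs⟩ := h1
  obtain ⟨r, hr⟩ := h2
  have hw : w = (s ++ (u ++ v)) ++ (u ++ r) := by rw [hs, hr, List.take_append_drop]
  have hl : s.length + (u.length + v.length) = i := by
    have := congrArg List.length hs
    simp at this
    omega
  have hl2 : u.length + r.length = w.length - i := by
    have := congrArg List.length hr
    simpa using this
  refine ⟨by omega, by omega, fun t ht => ?_⟩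
  have e1 : i - (u.length + v.length) + t = s.length + t := by omega
  have a1 : w[s.length + t]? = u[t]? := by
    rw [hw, List.append_assoc, List.getElem?_append_right (by omega), List.append_assoc,
      List.getElem?_append_left (by omega)]
    congr 1; omega
  have a2 : w[i + t]? = u[t]? := by
    rw [← List.getElem?_drop, ← hr, List.getElem?_append_left (by omega)]
  rw [e1, a1, a2]

theorem rep_conv_bwd (w : List α) (i m d : ℕ) (h1 : m + d ≤ i) (h2 : i + m ≤ w.length)
    (h : ∀ t < m, w[i - (m + d) + t]? = w[i + t]?) :
    ∃ u v : List α, u.length = m ∧ v.length = d ∧ (u ++ v) <:+ w.take i ∧ u <+: w.drop i := by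
  refine ⟨(w.drop i).take m, (w.take i).drop (i - d), by simp; omega, by simp; omega, ?_,
    List.take_prefix _ _⟩
  have : (w.drop i).take m ++ (w.take i).drop (i - d) = (w.take i).drop (i - (m + d)) := by
    apply List.ext_getElem?
    intro t
    by_cases ht : t < m
    · rw [List.getElem?_append_left (by simp; omega), List.getElem?_take_of_lt ht,
        List.getElem?_drop, List.getElem?_drop, List.getElem?_take_of_lt (by omega), h t ht]
    · rw [List.getElem?_append_right (by simp; omega), List.getElem?_drop, List.getElem?_drop]
      congr 1
      simp
      omega
  rw [this]
  exact List.drop_suffix _ _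

/-- Index form of membership in the set defining `LRep`. -/
def RepAt (A : ℝ) (w : List α) (j m d : ℕ) : Prop :=
  m + d < j ∧ j + m ≤ w.length + 1 ∧ (∀ t < m, ltr w (j - (m + d) + t) = ltr w (j + t)) ∧
    (m : ℝ) + (d : ℝ) ≤ A * (m : ℝ)

theorem repAt_iff (A : ℝ) (w : List α) (j m d : ℕ) (hj : 1 ≤ j) (hjn : j ≤ w.length) :
    RepAt A w j m d ↔ ∃ u v : List α, u.length = m ∧ v.length = d ∧
    (u ++ v) <:+ fac w 1 (j - 1) ∧ u <+: fac w j w.length ∧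
    (u.length : ℝ) + (v.length : ℝ) ≤ A * (u.length : ℝ) := by
  have f1 : fac w 1 (j - 1) = w.take (j - 1) := by simp [fac]
  have f2 : fac w j w.length = w.drop (j - 1) := by simp [fac]
  rw [f1, f2]
  constructor
  · rintro ⟨h1, h2, h3, h4⟩
    obtain ⟨u, v, hu, hv, h5, h6⟩ := rep_conv_bwd w (j - 1) m d (by omega) (by omega) (by
      intro t ht
      have := h3 t ht
      unfold ltr at this
      rw [show j - 1 - (m + d) + t = j - (m + d) + t - 1 by omega, this]
      congr 1; omega)
    exact ⟨u, v, hu, hv, h5, h6, by rw [hu, hv]; exact h4⟩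
  · rintro ⟨u, v, rfl, rfl, h5, h6, h7⟩
    obtain ⟨h1, h2, h3⟩ := rep_conv_fwd w u v (j - 1) (by omega) h5 h6
    refine ⟨by omega, by omega, fun t ht => ?_, h7⟩
    have := h3 t ht
    unfold ltr
    rw [show j - (u.length + v.length) + t - 1 = j - 1 - (u.length + v.length) + t by omega, this]
    congr 1; omega

theorem LRep_eq (A : ℝ) (w : List α) (j : ℕ) (hj : 1 ≤ j) (hjn : j ≤ w.length) :
    LRep A w j = sSup {m | ∃ d, RepAt A w j m d} := by
  unfold LRep
  congr 1
  ext m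
  simp only [Set.mem_ofPred_eq, repAt_iff A w j _ _ hj hjn]
  constructor
  · rintro ⟨u, v, h1, h2⟩
    exact ⟨_, u, v, h1, rfl, h2⟩
  · rintro ⟨d, u, v, h1, -, h2⟩
    exact ⟨u, v, h1, h2⟩

theorem rep_bdd (A : ℝ) (w : List α) (j : ℕ) : BddAbove {m | ∃ d, RepAt A w j m d} :=
  ⟨j, by rintro m ⟨d, h, -⟩; omega⟩

theorem SC_eq (A : ℝ) (hA : 1 ≤ A) (w : List α) (j : ℕ) (hj : 1 ≤ j) (hjn : j ≤ w.length) :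
    SC w j = sSup {m | 1 ≤ m ∧ RepAt A w j m 0} := by
  unfold SC
  congr 1
  ext m
  simp only [Set.mem_ofPred_eq, repAt_iff A w j _ _ hj hjn]
  constructor
  · rintro ⟨u, rfl, h0, h1, h2⟩
    refine ⟨List.length_pos_iff.2 h0, u, [], rfl, rfl, by simpa using h1, h2, ?_⟩
    have : (0 : ℝ) ≤ u.length := Nat.cast_nonneg _
    simp
    nlinarith
  · rintro ⟨h0, u, v, rfl, hv, h1, h2, -⟩
    obtain rfl := List.length_eq_zero_iff.1 hv
    exact ⟨u, rfl, List.length_pos_iff.1 h0, by simpa using h1, h2⟩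

theorem repAt_of_max (A : ℝ) (hA : 1 ≤ A) (w : List α) (j a b l : ℕ)
    (h : GapRepOcc A w a b l) (hb : b ≤ j)
    (hc : A * ((j : ℝ) - (b : ℝ)) ≤ (A - 1) * (l : ℝ) - ((b - a - l : ℕ) : ℝ)) :
    ∃ d, RepAt A w j (b + l - j) d := by
  obtain ⟨h1, h2, h3, h4, h5, h6⟩ := h
  obtain ⟨k, rfl⟩ := Nat.exists_eq_add_of_le hb
  obtain ⟨g, rfl⟩ := Nat.exists_eq_add_of_lt h3
  have e : a + l + g + 1 - a - l = g + 1 := by omega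
  rw [e] at hc h6
  push_cast at hc h6
  have hkl : k < l := by
    by_contra hcon
    have : (l : ℝ) ≤ k := by exact_mod_cast not_lt.1 hcon
    have : (0 : ℝ) ≤ g := Nat.cast_nonneg _
    have : (0 : ℝ) ≤ l := Nat.cast_nonneg _
    nlinarith
  obtain ⟨r, rfl⟩ := Nat.exists_eq_add_of_lt hkl
  refine ⟨g + 1 + k, by omega, by omega, fun t ht => ?_, ?_⟩
  · have := h5 (k + t) (by omega)
    convert this using 2 <;> omega
  · rw [show a + (k + r + 1) + g + 1 + (k + r + 1) - (a + (k + r + 1) + g + 1 + k) = r + 1 by omega]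
    push_cast at hc ⊢
    nlinarith

theorem max_of_repAt (A : ℝ) (hA : 1 ≤ A) (w : List α) (j m d : ℕ) (hm : 1 ≤ m)
    (h : RepAt A w j m (d + 1)) (hmax : ∀ m' d', RepAt A w j m' d' → m' ≤ m) :
    ∃ a b l : ℕ, MaxGapRepOcc A w a b l ∧ b ≤ j ∧
      A * ((j : ℝ) - (b : ℝ)) ≤ (A - 1) * (l : ℝ) - ((b - a - l : ℕ) : ℝ) ∧
      m = b + l - j := by
  classical
  obtain ⟨h1, h2, h3, h4⟩ := h
  -- the shift `k` of the left end
  let P : ℕ → Prop := fun k => k ≤ d ∧ m + (d + 1) + k < j ∧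
    ∀ t < m + k, ltr w (j - (m + (d + 1)) - k + t) = ltr w (j - k + t)
  have hP0 : P 0 := ⟨by omega, by omega, by simpa using h3⟩
  obtain ⟨k, hk, hkm⟩ : ∃ k, P k ∧ ¬ P (k + 1) := by
    by_contra hcon
    push Not at hcon
    have : ∀ k, P k := fun k => by
      induction k with
      | zero => exact hP0
      | succ k ih => exact hcon k ih
    have := (this (d + 1)).1
    omega
  obtain ⟨k1, k2, k3⟩ := hk
  obtain ⟨g, rfl⟩ := Nat.exists_eq_add_of_le k1
  have e : j - k - (j - (m + (k + g + 1)) - k) - (m + k) = g + 1 := by omega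
  have hkc : (0 : ℝ) ≤ k := Nat.cast_nonneg _
  push_cast at h4
  refine ⟨j - (m + (k + g + 1)) - k, j - k, m + k, ⟨⟨by omega, by omega, by omega, by omega, k3, ?_⟩,
    ?_, ?_⟩, by omega, ?_, by omega⟩
  · rw [e]; push_cast; nlinarith
  · rintro ⟨-, r2, r3⟩
    have : RepAt A w j (m + 1) (k + g) := by
      refine ⟨by omega, by omega, fun t ht => ?_, ?_⟩
      · rcases Nat.lt_succ_iff_lt_or_eq.1 ht with ht | rfl
        · convert h3 t ht using 2; omega
        · convert r3 using 2 <;> omega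
      · push_cast; nlinarith
    have := hmax _ _ this
    omega
  · rintro ⟨r1, r2, r3⟩
    apply hkm
    refine ⟨by omega, by omega, fun t ht => ?_⟩
    rcases t with _ | t
    · convert r3 using 2 <;> omega
    · convert k3 t (by omega) using 2 <;> omega
  · rw [e, Nat.cast_sub (by omega)]; push_cast; nlinarith

theorem LRep_eq_max_over_maximal_gapped_repeats_and_centred_squares
    (A : ℝ) (hA : 1 ≤ A) (w : List α) (n : ℕ) (hlen : w.length = n) (hn : 1 ≤ n)
    (j : ℕ) (hj : 1 ≤ j) (hjn : j ≤ n) :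
    LRep A w j = sSup ({SC w j} ∪ {m : ℕ | ∃ a b ℓ : ℕ, MaxGapRepOcc A w a b ℓ ∧ b ≤ j ∧
      A * ((j : ℝ) - (b : ℝ)) ≤ (A - 1) * (ℓ : ℝ) - ((b - a - ℓ : ℕ) : ℝ) ∧
      m = b + ℓ - j}) := by
  subst hlen
  rw [LRep_eq A w j hj hjn]
  have hz : RepAt A w j 0 0 := ⟨by omega, by omega, by simp, by simp⟩
  have hne : {m | ∃ d, RepAt A w j m d}.Nonempty := ⟨0, 0, hz⟩
  have hbd := rep_bdd A w j
  have hsc := SC_eq A hA w j hj hjn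
  have hscb : BddAbove {m | 1 ≤ m ∧ RepAt A w j m 0} :=
    ⟨j, by rintro m ⟨_, h, -⟩; omega⟩
  have hub : ∀ x ∈ ({SC w j} ∪ {m : ℕ | ∃ a b ℓ : ℕ, MaxGapRepOcc A w a b ℓ ∧ b ≤ j ∧
      A * ((j : ℝ) - (b : ℝ)) ≤ (A - 1) * (ℓ : ℝ) - ((b - a - ℓ : ℕ) : ℝ) ∧
      m = b + ℓ - j} : Set ℕ), x ≤ sSup {m | ∃ d, RepAt A w j m d} := by
    rintro x (hx | ⟨a, b, l, hx, hb, hc, rfl⟩)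
    · rw [Set.mem_singleton_iff] at hx
      rw [hx, hsc]
      rcases Set.eq_empty_or_nonempty {m | 1 ≤ m ∧ RepAt A w j m 0} with h0 | h0
      · rw [h0]; simp
      · exact csSup_le_csSup hbd h0 fun m hm => ⟨0, hm.2⟩
    · exact le_csSup hbd (repAt_of_max A hA w j a b l hx.1 hb hc)
  apply le_antisymm
  · have hub' : BddAbove ({SC w j} ∪ {m : ℕ | ∃ a b ℓ : ℕ, MaxGapRepOcc A w a b ℓ ∧ b ≤ j ∧
      A * ((j : ℝ) - (b : ℝ)) ≤ (A - 1) * (ℓ : ℝ) - ((b - a - ℓ : ℕ) : ℝ) ∧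
      m = b + ℓ - j} : Set ℕ) := ⟨_, hub⟩
    obtain ⟨d, hd⟩ := Nat.sSup_mem hne hbd
    have hmax : ∀ m' d', RepAt A w j m' d' → m' ≤ sSup {m | ∃ d, RepAt A w j m d} :=
      fun m' d' h => le_csSup hbd ⟨d', h⟩
    generalize sSup {m | ∃ d, RepAt A w j m d} = M at hd hmax ⊢
    rcases Nat.eq_zero_or_pos M with rfl | hM
    · exact Nat.zero_le _
    rcases d with _ | d
    · refine le_trans ?_ (le_csSup hub' (Or.inl rfl))
      rw [hsc]
      exact le_csSup hscb ⟨hM, hd⟩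
    · exact le_csSup hub' (Or.inr (max_of_repAt A hA w j M d hM hd hmax))
  · exact csSup_le ⟨_, Or.inl rfl⟩ hub
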